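/- Let (R, m) be a commutative Noetherian local integral domain of Krull dimension n that is not catenary. Then there exists a prime ideal p of R such that cd(p) ≠ ht(p); in particular, p is not a set-theoretic complete intersection ideal. -/

import Mathlib

universe u

open CategoryTheory

/-- The cohomological dimension of `M` with respect to `I`:
`cd(I,M) = sup { i ∈ ℕ | H^i_I(M) ≠ 0 }`, as an element of `ℕ∞`. -/
noncomputable def cohomologicalDimension {R : Type u} [CommRing R] (I : Ideal R)
    (M : ModuleCat.{u} R) : ℕ∞ :=
  sSup {c : ℕ∞ | ∃ i : ℕ, c = i ∧ Nontrivial ((localCohomology I i).obj M)}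

/-- The height of an ideal: the infimum of the heights of the prime ideals containing it. -/
noncomputable def idealHeight {R : Type u} [CommRing R] (I : Ideal R) : ℕ∞ :=
  ⨅ (p : PrimeSpectrum R) (_ : I ≤ p.asIdeal), Order.height p

/-!
Adding one generator `x` to an ideal `I` raises the cohomological dimension by at most one: this
follows from the long exact `Ext` sequences of
`0 ⟶ R ⧸ (I ^ n : x ^ t) ⟶ R ⧸ I ^ n ⟶ R ⧸ (I ^ n + (x ^ t)) ⟶ 0`, since by the Artin-Rees lemma
the colon ideals on the left can replace the powers of `I` in the limit.  Cohomological dimension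
depends only on the radical, and the maximal ideal `m` is, up to radical, generated by `p` and
`dim (R ⧸ p)` further elements, so `cd(m) ≤ cd(p) + dim (R ⧸ p)`.  If `cd = ht` held for all
primes, then
`dim R = ht(m) = cd(m) ≤ cd(p) + dim (R ⧸ p) = ht(p) + dim (R ⧸ p) ≤ dim R`.
-/

section KerEq

variable {A B B' : Type*} [AddGroup A] [AddGroup B] [AddGroup B'] (f : A →+ B) (g : A →+ B')
  (hf : Function.Surjective f) (hg : Function.Surjective g) (h : f.ker = g.ker)

/-- The isomorphism between the targets of two surjections with the same kernel. -/
noncomputable def addEquivOfKerEq : B ≃+ B' :=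
  (QuotientAddGroup.quotientKerEquivOfSurjective f hf).symm.trans
    ((QuotientAddGroup.quotientAddEquivOfEq h).trans
      (QuotientAddGroup.quotientKerEquivOfSurjective g hg))

theorem addEquivOfKerEq_apply (a : A) : addEquivOfKerEq f g hf hg h (f a) = g a := by
  have ha : (QuotientAddGroup.quotientKerEquivOfSurjective f hf).symm (f a) =
      QuotientAddGroup.mk a := (AddEquiv.symm_apply_eq _).2 rfl
  simp only [addEquivOfKerEq, AddEquiv.trans_apply, ha]
  rfl

end KerEq

section ExtComparison

open Limits Opposite ComplexShape

universe w v' u'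

variable {R : Type u} [Ring R] {C : Type u'} [Category.{v'} C] [Abelian C] [Linear R C]
  {X X' Y : C} {P : ProjectiveResolution X} {P' : ProjectiveResolution X'} {n : ℕ}

variable (R) in
/-- The complex `Hom(P, Y)`, with its arrows formally reversed: it lives in `(ModuleCat R)ᵒᵖ`
because that is where `Ext R C` is derived. -/
noncomputable abbrev opHomComplex (P : ProjectiveResolution X) (Y : C) :
    ChainComplex (ModuleCat.{v'} R)ᵒᵖ ℕ :=
  (((linearYoneda R C).obj Y).rightOp.mapHomologicalComplex (down ℕ)).obj P.complex

variable (R) in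
/-- The `R`-module of `n`-cocycles of the complex `Hom(P, Y)`. -/
noncomputable abbrev homCocycles (P : ProjectiveResolution X) (Y : C) (n : ℕ) : ModuleCat.{v'} R :=
  ((opHomComplex R P Y).opcycles n).unop

/-- The inclusion of the `n`-cocycles of `Hom(P, Y)` into `Hom(Pₙ, Y)`. -/
noncomputable def homCocyclesι : homCocycles R P Y n →ₗ[R] (P.complex.X n ⟶ Y) :=
  ((opHomComplex R P Y).pOpcycles n).unop.hom

theorem homCocyclesι_injective :
    Function.Injective (homCocyclesι : homCocycles R P Y n → (P.complex.X n ⟶ Y)) :=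
  (ModuleCat.mono_iff_injective ((opHomComplex R P Y).pOpcycles n).unop).1 inferInstance

theorem d_comp_homCocyclesι (z : homCocycles R P Y n) :
    P.complex.d (n + 1) n ≫ homCocyclesι z = 0 :=
  ShortComplex.moduleCat_zero_apply
    (ShortComplex.mk _ _ ((opHomComplex R P Y).d_pOpcycles (n + 1) n)).unop z

variable (R) in
theorem exists_homCocyclesι_eq (f : P.complex.X n ⟶ Y) (hf : P.complex.d (n + 1) n ≫ f = 0) :
    ∃ z : homCocycles R P Y n, homCocyclesι z = f := by
  let L := opHomComplex R P Y
  have h : (ShortComplex.mk _ _ (L.d_pOpcycles (n + 1) n)).unop.Exact :=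
    (ShortComplex.exact_of_g_is_cokernel _ (L.opcyclesIsCokernel (n + 1) n (by simp))).unop
  exact (ShortComplex.moduleCat_exact_iff _).1 h f hf

/-- The map on `n`-cocycles from `Hom(P, Y)` to `Hom(P', Y)` given by a chain map `P' ⟶ P`. -/
noncomputable def homCocyclesMap (φ : P'.complex ⟶ P.complex) :
    homCocycles R P Y n →ₗ[R] homCocycles R P' Y n :=
  (HomologicalComplex.opcyclesMap
    ((((linearYoneda R C).obj Y).rightOp.mapHomologicalComplex (down ℕ)).map φ) n).unop.hom

theorem homCocyclesι_map (φ : P'.complex ⟶ P.complex) (z : homCocycles R P Y n) :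
    homCocyclesι (homCocyclesMap φ z) = φ.f n ≫ homCocyclesι z :=
  ConcreteCategory.congr_hom (congrArg Quiver.Hom.unop (HomologicalComplex.p_opcyclesMap
    ((((linearYoneda R C).obj Y).rightOp.mapHomologicalComplex (down ℕ)).map φ) n)) z

section Derived

variable [EnoughProjectives C]

/-- The class in `Ext R C n` of a cocycle of `Hom(P, Y)`. -/
noncomputable def derivedExtClass :
    homCocycles R P Y n →ₗ[R] ((Ext R C n).obj (op X)).obj Y :=
  (((opHomComplex R P Y).homologyι n).unop ≫
    (P.isoLeftDerivedObj ((linearYoneda R C).obj Y).rightOp n).hom.unop).hom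

theorem derivedExtClass_surjective :
    Function.Surjective (derivedExtClass : homCocycles R P Y n → ((Ext R C n).obj (op X)).obj Y) :=
  have hι : Function.Surjective ((opHomComplex R P Y).homologyι n).unop :=
    (ModuleCat.epi_iff_surjective _).1 inferInstance
  have hderived : Function.Surjective
      (P.isoLeftDerivedObj ((linearYoneda R C).obj Y).rightOp n).hom.unop :=
    (ModuleCat.epi_iff_surjective _).1 inferInstance
  hderived.comp hι

/-- In degree `0` Mathlib's convention is `(down ℕ).next 0 = 0` with zero differential, so the
condition becomes `homCocyclesι z = 0`. -/
theorem derivedExtClass_eq_zero_iff (z : homCocycles R P Y n) :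
    (derivedExtClass z : ((Ext R C n).obj (op X)).obj Y) = 0 ↔
      ∃ g : P.complex.X ((down ℕ).next n) ⟶ Y,
        P.complex.d n ((down ℕ).next n) ≫ g = homCocyclesι z := by
  let L := opHomComplex R P Y
  let F := ((linearYoneda R C).obj Y).rightOp
  have hL := (ShortComplex.exact_of_f_is_kernel (ShortComplex.mk _ _
    (L.homologyι_comp_fromOpcycles n _)) (L.homologyIsKernel n _ rfl)).unop
  have hinj : Function.Injective (P.isoLeftDerivedObj F n).hom.unop :=
    (ModuleCat.mono_iff_injective _).1 inferInstance
  have hd (g : P.complex.X ((down ℕ).next n) ⟶ Y) :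
      homCocyclesι ((L.fromOpcycles n _).unop g) = P.complex.d n _ ≫ g :=
    ConcreteCategory.congr_hom (congrArg Quiver.Hom.unop (L.p_fromOpcycles n _)) g
  refine ((map_eq_zero_iff _ hinj).trans
    (SetLike.ext_iff.1 ((ShortComplex.moduleCat_exact_iff_range_eq_ker _).1 hL) z).symm).trans
      (exists_congr fun g ↦ ?_)
  exact homCocyclesι_injective.eq_iff.symm.trans (Eq.congr_left (hd g))

theorem derivedExtClass_map {g : X' ⟶ X} (φ : P'.Hom P g) (z : homCocycles R P Y n) :
    derivedExtClass (homCocyclesMap φ.hom z) =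
      ((Ext R C n).map g.op).app Y (derivedExtClass z) := by
  let F := ((linearYoneda R C).obj Y).rightOp
  let ψ := (F.mapHomologicalComplex (down ℕ)).map φ.hom
  have hderived := P'.isoLeftDerivedObj_hom_naturality g P φ.hom
    (φ.hom_f_zero_comp_π_f_zero.trans (by simp)) F n
  have hι := HomologicalComplex.homologyι_naturality ψ n
  exact ((ConcreteCategory.congr_hom (congrArg Quiver.Hom.unop hderived) _).trans
    (congrArg (P'.isoLeftDerivedObj F n).hom.unop
      (ConcreteCategory.congr_hom (congrArg Quiver.Hom.unop hι) z))).symm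

end Derived

section Abelian

variable [HasExt.{w} C]

theorem extMk_eq_zero_iff_exists_d_next_comp (f : P.complex.X n ⟶ Y)
    (hf : P.complex.d (n + 1) n ≫ f = 0) :
    P.extMk f (n + 1) rfl hf = 0 ↔
      ∃ g : P.complex.X ((down ℕ).next n) ⟶ Y, P.complex.d n ((down ℕ).next n) ≫ g = f := by
  cases n with
  | zero =>
    have hd : P.complex.d 0 ((down ℕ).next 0) = 0 := P.complex.shape _ _ (by simp)
    have hX : IsZero (P.cochainComplex.X 1) :=
      P.complex.isZero_extend_X embeddingDownNat 1 fun i hi ↦ by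
        rw [embeddingDownNat_f] at hi
        lia
    simp only [hd, zero_comp, exists_const, eq_comm (a := (0 : P.complex.X 0 ⟶ Y))]
    simp only [← P.extEquivCohomologyClass.apply_eq_iff_eq,
      ProjectiveResolution.extEquivCohomologyClass_extMk,
      ProjectiveResolution.extEquivCohomologyClass_zero,
      CochainComplex.HomComplex.CohomologyClass.mk_eq_zero_iff]
    rw [CochainComplex.HomComplex.Cocycle.toSingleMk_mem_coboundaries_iff _ _ _ _ _ 1 (by lia)]
    simp [hX.eq_of_tgt (P.cochainComplex.d 0 1) 0, eq_comm (a := (0 : P.cochainComplex.X 0 ⟶ Y))]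
  | succ n =>
    rw [ChainComplex.next_nat_succ]
    exact P.extMk_eq_zero_iff f _ rfl hf n rfl

/-- The class in `Abelian.Ext` of a cocycle of `Hom(P, Y)`. -/
noncomputable def abelianExtClass : homCocycles R P Y n →+ Abelian.Ext X Y n where
  toFun z := P.extMk (homCocyclesι z) (n + 1) rfl (d_comp_homCocyclesι z)
  map_zero' := by simp
  map_add' z z' := by simp [ProjectiveResolution.add_extMk]

theorem abelianExtClass_surjective :
    Function.Surjective (abelianExtClass : homCocycles R P Y n → Abelian.Ext X Y n) := by
  intro e
  obtain ⟨f, hf, rfl⟩ := P.extMk_surjective e (n + 1) rfl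
  obtain ⟨z, rfl⟩ := exists_homCocyclesι_eq R f hf
  exact ⟨z, rfl⟩

theorem abelianExtClass_map {g : X' ⟶ X} (φ : P'.Hom P g) (z : homCocycles R P Y n) :
    abelianExtClass (homCocyclesMap φ.hom z) =
      (Abelian.Ext.mk₀ g).comp (abelianExtClass z) (zero_add n) := by
  refine Eq.trans ?_ (P.mk₀_comp_extMk _ _ rfl (d_comp_homCocyclesι z) φ).symm
  simp only [abelianExtClass, AddMonoidHom.coe_mk, ZeroHom.coe_mk, homCocyclesι_map]

end Abelian

variable [EnoughProjectives C] [HasExt.{w} C]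

theorem ker_derivedExtClass_eq_ker_abelianExtClass :
    (derivedExtClass : homCocycles R P Y n →ₗ[R] _).toAddMonoidHom.ker =
      (abelianExtClass : homCocycles R P Y n →+ Abelian.Ext.{w} X Y n).ker := by
  ext z
  exact (derivedExtClass_eq_zero_iff z).trans
    (extMk_eq_zero_iff_exists_d_next_comp _ (d_comp_homCocyclesι z)).symm

/-- The comparison between the two versions of `Ext` in Mathlib: the one derived from
`linearYoneda` and the one defined by morphisms in the derived category. Both are quotients of the
cocycles of `Hom(P, Y)` by the coboundaries. -/
noncomputable def extAddEquiv (P : ProjectiveResolution X) (Y : C) (n : ℕ) :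
    ((Ext R C n).obj (op X)).obj Y ≃+ Abelian.Ext.{w} X Y n :=
  addEquivOfKerEq (derivedExtClass (P := P)).toAddMonoidHom abelianExtClass
    derivedExtClass_surjective abelianExtClass_surjective ker_derivedExtClass_eq_ker_abelianExtClass

theorem extAddEquiv_derivedExtClass (z : homCocycles R P Y n) :
    extAddEquiv P Y n (derivedExtClass z : ((Ext R C n).obj (op X)).obj Y) = abelianExtClass z :=
  addEquivOfKerEq_apply _ _ _ _ _ z

theorem extAddEquiv_map_app (g : X' ⟶ X) (e : ((Ext R C n).obj (op X)).obj Y) :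
    extAddEquiv P' Y n (((Ext R C n).map g.op).app Y e) =
      (Abelian.Ext.mk₀ g).comp (extAddEquiv P Y n e) (zero_add n) := by
  let φ : P'.Hom P g := ⟨ProjectiveResolution.lift g P' P, by
    rw [← HomologicalComplex.comp_f, ProjectiveResolution.lift_commutes,
      HomologicalComplex.comp_f]⟩
  obtain ⟨z, rfl⟩ := derivedExtClass_surjective (P := P) e
  rw [← derivedExtClass_map φ, extAddEquiv_derivedExtClass, extAddEquiv_derivedExtClass,
    abelianExtClass_map]

end ExtComparison

section FilteredColimit

open Limits

theorem subsingleton_pt_iff_forall_exists_map_eq_zero {R : Type*} [Ring R] {J : Type*} [Category J]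
    [IsFiltered J] [PreservesColimitsOfShape J (forget (ModuleCat.{u} R))]
    {D : J ⥤ ModuleCat.{u} R} {c : Cocone D} (hc : IsColimit c) :
    Subsingleton c.pt ↔ ∀ (j : J) (x : D.obj j), ∃ (k : J) (f : j ⟶ k), D.map f x = 0 := by
  refine ⟨fun hs j x ↦ ?_, fun h ↦ subsingleton_of_forall_eq 0 fun x ↦ ?_⟩
  · obtain ⟨k, f, g, hfg⟩ := (Concrete.isColimit_rep_eq_iff_exists _ hc x (0 : D.obj j)).1
      (hs.elim _ _)
    exact ⟨k, f, hfg.trans (map_zero _)⟩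
  · obtain ⟨j, x, rfl⟩ := Concrete.isColimit_exists_rep _ hc x
    obtain ⟨k, f, hf⟩ := h j x
    rw [← Cocone.w c f, ConcreteCategory.comp_apply, hf, map_zero]

end FilteredColimit

section QuotientMaps

open Abelian

variable {R : Type u} [CommRing R] {I J K : Ideal R}

/-- The projection `R ⧸ I ⟶ R ⧸ J` for `I ≤ J`, as a morphism of `R`-modules. -/
def quotientProj (h : I ≤ J) : ModuleCat.of R (R ⧸ I) ⟶ ModuleCat.of R (R ⧸ J) :=
  ModuleCat.ofHom (Submodule.factor h)

/-- Multiplication by `y` as a map `R ⧸ I ⟶ R ⧸ J`, defined when `y I ≤ J`. -/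
def quotientMul (y : R) (h : I ≤ J.colon {y}) :
    ModuleCat.of R (R ⧸ I) ⟶ ModuleCat.of R (R ⧸ J) :=
  ModuleCat.ofHom (Submodule.mapQ I J (LinearMap.mulRight R y) fun _ ha ↦
    Submodule.mem_colon_singleton.1 (h ha))

theorem quotientProj_comp_quotientProj (h : I ≤ J) (h' : J ≤ K) :
    quotientProj h ≫ quotientProj h' = quotientProj (h.trans h') := by
  ext : 1
  apply Submodule.linearMap_qext
  rfl

theorem quotientMul_comp_quotientProj (y : R) (h : I ≤ J.colon {y}) (h' : J ≤ K) :
    quotientMul y h ≫ quotientProj h' =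
      quotientMul y (h.trans (Submodule.colon_mono h' subset_rfl)) := by
  ext : 1
  apply Submodule.linearMap_qext
  rfl

variable {M : ModuleCat.{u} R} {i : ℕ}

/-- The restriction map `Ext^i(R ⧸ J, M) → Ext^i(R ⧸ I, M)` for `I ≤ J`. -/
noncomputable def extRestrict (h : I ≤ J) (e : Ext (ModuleCat.of R (R ⧸ J)) M i) :
    Ext (ModuleCat.of R (R ⧸ I)) M i :=
  (Ext.mk₀ (quotientProj h)).comp e (zero_add i)

theorem extRestrict_zero (h : I ≤ J) :
    extRestrict h (0 : Ext (ModuleCat.of R (R ⧸ J)) M i) = 0 :=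
  Ext.comp_zero ..

theorem extRestrict_extRestrict (h : I ≤ J) (h' : J ≤ K) (e : Ext (ModuleCat.of R (R ⧸ K)) M i) :
    extRestrict h (extRestrict h' e) = extRestrict (h.trans h') e := by
  simp only [extRestrict, Ext.mk₀_comp_mk₀_assoc, quotientProj_comp_quotientProj]

theorem mk₀_quotientMul_comp_eq_zero (y : R) (h : I ≤ J.colon {y}) (h' : J ≤ K)
    {f : Ext (ModuleCat.of R (R ⧸ K)) M i} (hf : extRestrict h' f = 0) :
    (Ext.mk₀ (quotientMul y (h.trans (Submodule.colon_mono h' subset_rfl)))).comp f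
      (zero_add i) = 0 := by
  rw [extRestrict] at hf
  rw [← quotientMul_comp_quotientProj y h h', ← Ext.mk₀_comp_mk₀_assoc, hf, Ext.comp_zero]

end QuotientMaps

section ColonSequence

open Abelian

variable {R : Type u} [CommRing R] {J J' K : Ideal R}

/-- The sequence `R ⧸ (J : y) ⟶ R ⧸ J ⟶ R ⧸ (J + (y))` whose first map is multiplication
by `y`. -/
def colonShortComplex (J : Ideal R) (y : R) : ShortComplex (ModuleCat.{u} R) where
  X₁ := ModuleCat.of R (R ⧸ J.colon {y})
  X₂ := ModuleCat.of R (R ⧸ J)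
  X₃ := ModuleCat.of R (R ⧸ (J ⊔ Ideal.span {y}))
  f := quotientMul y le_rfl
  g := quotientProj le_sup_left
  zero := by
    ext : 1
    apply Submodule.linearMap_qext
    ext
    exact (Submodule.Quotient.mk_eq_zero _).2
      (Ideal.mem_sup_right (Ideal.mul_mem_left _ _ (Ideal.mem_span_singleton_self y)))

theorem colonShortComplex_shortExact (J : Ideal R) (y : R) :
    (colonShortComplex J y).ShortExact := by
  refine ModuleCat.shortComplex_shortExact _ (fun b ↦ ⟨fun hb ↦ ?_, ?_⟩) ?_
    (Submodule.factor_surjective (p' := J ⊔ Ideal.span {y}) le_sup_left)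
  · obtain ⟨b, rfl⟩ := Submodule.Quotient.mk_surjective _ b
    obtain ⟨j, hj, z, hz, rfl⟩ := Submodule.mem_sup.1
      ((Submodule.Quotient.mk_eq_zero (J ⊔ Ideal.span {y})).1 hb)
    obtain ⟨a, rfl⟩ := Ideal.mem_span_singleton'.1 hz
    refine ⟨Submodule.Quotient.mk a, (Submodule.Quotient.eq J).2 ?_⟩
    simpa using hj
  · rintro ⟨a, rfl⟩
    exact ShortComplex.moduleCat_zero_apply (colonShortComplex J y) a
  · rw [injective_iff_map_eq_zero]
    intro a ha
    obtain ⟨a, rfl⟩ := Submodule.Quotient.mk_surjective _ a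
    exact (Submodule.Quotient.mk_eq_zero _).2
      (Submodule.mem_colon_singleton.2 ((Submodule.Quotient.mk_eq_zero J).1 ha))

theorem colon_mul_le_colon_colon (h : J' ≤ J) (y z : R) :
    J'.colon {z * y} ≤ (J.colon {y}).colon {z} := fun a ha ↦ by
  simpa [Submodule.mem_colon_singleton, mul_assoc] using h (Submodule.mem_colon_singleton.1 ha)

theorem sup_span_singleton_mul_le (h : J' ≤ J) (y z : R) :
    J' ⊔ Ideal.span {z * y} ≤ J ⊔ Ideal.span {y} :=
  sup_le_sup h (Ideal.span_singleton_le_span_singleton.2 (dvd_mul_left y z))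

/-- Multiplication by `z` from the sequence for `z * y` to the sequence for `y`, lying over the
projections on the other two terms. -/
def colonShortComplexMap (h : J' ≤ J) (y z : R) :
    colonShortComplex J' (z * y) ⟶ colonShortComplex J y where
  τ₁ := quotientMul z (colon_mul_le_colon_colon h y z)
  τ₂ := quotientProj h
  τ₃ := quotientProj (sup_span_singleton_mul_le h y z)
  comm₁₂ := by
    ext : 1
    apply Submodule.linearMap_qext
    ext
    exact congrArg (Submodule.Quotient.mk (p := J)) (mul_assoc _ _ _)
  comm₂₃ := by
    ext : 1
    apply Submodule.linearMap_qext
    rfl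

theorem mk₀_τ₃_comp_extClass_comp {C : Type*} [Category C] [Abelian C] [HasExt C]
    {S S' : ShortComplex C} (hS : S.ShortExact) (hS' : S'.ShortExact) (φ : S' ⟶ S) {Y : C} {i : ℕ}
    (f : Ext S.X₁ Y i) :
    (Ext.mk₀ φ.τ₃).comp (hS.extClass.comp f (add_comm 1 i)) (zero_add (i + 1)) =
      hS'.extClass.comp ((Ext.mk₀ φ.τ₁).comp f (zero_add i)) (add_comm 1 i) := by
  rw [← Ext.comp_assoc _ _ _ (zero_add 1) (add_comm 1 i) (by lia),
    ← ShortComplex.ShortExact.extClass_naturality hS' hS φ,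
    Ext.comp_assoc _ _ _ (add_zero 1) (zero_add i) (by lia)]

variable {M : ModuleCat.{u} R} {i : ℕ}

theorem exists_extClass_comp_eq_extRestrict {y : R} (hJ : J ≤ K) (hy : Ideal.span {y} ≤ K)
    (e : Ext (ModuleCat.of R (R ⧸ K)) M (i + 1)) (he : extRestrict hJ e = 0) :
    ∃ f : Ext (ModuleCat.of R (R ⧸ J.colon {y})) M i,
      (colonShortComplex_shortExact J y).extClass.comp f (add_comm 1 i) =
        extRestrict (sup_le hJ hy) e :=
  Ext.contravariant_sequence_exact₃ (colonShortComplex_shortExact J y) M _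
    ((extRestrict_extRestrict le_sup_left (sup_le hJ hy) e).trans he) (add_comm 1 i)

theorem extRestrict_extClass_comp_eq_zero (h : J' ≤ J) (y z : R)
    {f : Ext (ModuleCat.of R (R ⧸ J.colon {y})) M i}
    (hf : (Ext.mk₀ (quotientMul z (colon_mul_le_colon_colon h y z))).comp f (zero_add i) = 0) :
    extRestrict (sup_span_singleton_mul_le h y z)
      ((colonShortComplex_shortExact J y).extClass.comp f (add_comm 1 i)) = 0 := by
  have hS := colonShortComplex_shortExact J' (z * y)
  exact (mk₀_τ₃_comp_extClass_comp _ hS (colonShortComplexMap h y z) f).trans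
    ((congrArg (hS.extClass.comp · (add_comm 1 i)) hf).trans (Ext.comp_zero ..))

end ColonSequence

theorem exists_colon_pow_le_colon {R : Type*} [CommRing R] [IsNoetherianRing R] (I : Ideal R)
    (x : R) (t s : ℕ) :
    ∃ c k, ∀ m ≥ k, (I ^ m).colon {x ^ c * x ^ t} ≤ (I ^ s).colon {x ^ c} := by
  -- `x` may be a zero divisor, but `x ^ c` kills everything annihilated by a power of `x`.
  obtain ⟨c, hc⟩ := monotone_stabilizes_iff_noetherian.2 ‹_›
    (LinearMap.iterateKer (LinearMap.mulRight R x))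
  have hstable (a : R) (ha : a * x ^ (c + t) = 0) : a * x ^ c = 0 := by
    simpa [LinearMap.iterateKer, ha] using SetLike.ext_iff.1 (hc (c + t) (by lia)) a
  obtain ⟨k, hk⟩ := Ideal.exists_pow_inf_eq_pow_smul I (Ideal.span {x ^ (c + t)})
  refine ⟨c, k + s, fun m hm a ha ↦ ?_⟩
  rw [Submodule.mem_colon_singleton, ← pow_add] at ha
  have hmem : a • x ^ (c + t) ∈ I ^ s * Ideal.span {x ^ (c + t)} := by
    have : a • x ^ (c + t) ∈ I ^ m • (⊤ : Ideal R) ⊓ Ideal.span {x ^ (c + t)} :=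
      ⟨by simpa using ha, Ideal.mul_mem_left _ _ (Ideal.mem_span_singleton_self _)⟩
    rw [hk m (by lia)] at this
    exact Ideal.mul_mono (Ideal.pow_le_pow_right (by lia)) inf_le_right this
  obtain ⟨b, hb, hba⟩ := Ideal.mem_mul_span_singleton.1 hmem
  have hac : a * x ^ c = b * x ^ c := by
    rw [← sub_eq_zero, ← sub_mul]
    exact hstable _ (by rw [sub_mul, hba, smul_eq_mul, sub_self])
  rw [Submodule.mem_colon_singleton, smul_eq_mul, hac]
  exact Ideal.mul_mem_right _ _ hb

section LocalCohomology

open Limits Opposite Abelian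

variable {R : Type u} [CommRing R]

theorem subsingleton_localCohomology_iff (I : Ideal R) (i : ℕ) (M : ModuleCat.{u} R) :
    Subsingleton ((localCohomology I i).obj M) ↔
      ∀ (t : ℕ) (e : Ext (ModuleCat.of R (R ⧸ I ^ t)) M i), ∃ (s : ℕ) (h : t ≤ s),
        extRestrict (Ideal.pow_le_pow_right (I := I) h) e = 0 := by
  let D := localCohomology.diagram (localCohomology.idealPowersDiagram I) i
  have := localCohomology.hasColimitDiagram.{u, 0} (localCohomology.idealPowersDiagram I) i
  have : PreservesFilteredColimitsOfSize.{0, 0} (forget (ModuleCat.{u} R)) :=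
    preservesFilteredColimitsOfSize_shrink.{0, u, 0, u} _
  have hD := subsingleton_pt_iff_forall_exists_map_eq_zero (isColimitOfPreserves
    ((evaluation (ModuleCat.{u} R) (ModuleCat.{u} R)).obj M) (colimit.isColimit D))
  let comparison (t : ℕ) := extAddEquiv (R := R)
    (projectiveResolution (ModuleCat.of R (R ⧸ I ^ t))) M i
  have hmap {t s : ℕ} (h : t ≤ s) (e) :
      comparison s ((D.map (homOfLE h).op.op).app M e) =
        extRestrict (Ideal.pow_le_pow_right (I := I) h) (comparison t e) :=
    extAddEquiv_map_app _ e
  refine hD.trans ⟨fun H t e ↦ ?_, fun H j e ↦ ?_⟩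
  · obtain ⟨e, rfl⟩ := (comparison t).surjective e
    obtain ⟨k, f, hf⟩ := H (op (op t)) e
    exact ⟨k.unop.unop, leOfHom f.unop.unop, (hmap _ e).symm.trans
      ((congrArg _ hf).trans (map_zero _))⟩
  · obtain ⟨s, h, hs⟩ := H j.unop.unop (comparison _ e)
    exact ⟨op (op s), (homOfLE h).op.op, (comparison s).injective
      ((hmap h e).trans (hs.trans (map_zero _).symm))⟩

variable {I : Ideal R} {M : ModuleCat.{u} R} {i : ℕ}

theorem exists_pow_le_extRestrict_eq_zero (hI : Subsingleton ((localCohomology I i).obj M))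
    {K : Ideal R} {t : ℕ} (hK : I ^ t ≤ K) (e : Ext (ModuleCat.of R (R ⧸ K)) M i) :
    ∃ (s : ℕ) (hs : I ^ s ≤ K), extRestrict hs e = 0 := by
  obtain ⟨s, hs, he⟩ := (subsingleton_localCohomology_iff I i M).1 hI t (extRestrict hK e)
  exact ⟨s, (Ideal.pow_le_pow_right hs).trans hK, (extRestrict_extRestrict _ hK e).symm.trans he⟩

theorem exists_mk₀_quotientMul_pow_comp_eq_zero [IsNoetherianRing R]
    (hI : Subsingleton ((localCohomology I i).obj M)) (x : R) (t n : ℕ)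
    (f : Ext (ModuleCat.of R (R ⧸ (I ^ n).colon {x ^ t})) M i) :
    ∃ (c m : ℕ) (h : I ^ m ≤ I ^ n),
      (Ext.mk₀ (quotientMul (x ^ c) (colon_mul_le_colon_colon h (x ^ t) (x ^ c)))).comp f
        (zero_add i) = 0 := by
  obtain ⟨s, hs, hfs⟩ := exists_pow_le_extRestrict_eq_zero hI Ideal.le_colon f
  obtain ⟨c, k, hck⟩ := exists_colon_pow_le_colon I x t s
  exact ⟨c, max k n, Ideal.pow_le_pow_right (le_max_right k n),
    mk₀_quotientMul_comp_eq_zero (x ^ c) (hck _ (le_max_left k n)) hs hfs⟩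

theorem subsingleton_localCohomology_sup_span_singleton [IsNoetherianRing R] (x : R)
    (h₁ : Subsingleton ((localCohomology I i).obj M))
    (h₂ : Subsingleton ((localCohomology I (i + 1)).obj M)) :
    Subsingleton ((localCohomology (I ⊔ Ideal.span {x}) (i + 1)).obj M) := by
  refine (subsingleton_localCohomology_iff _ (i + 1) M).2 fun t e ↦ ?_
  obtain ⟨n, hn, he⟩ := exists_pow_le_extRestrict_eq_zero h₂ (Ideal.pow_right_mono le_sup_left t) e
  have hx : Ideal.span {x ^ t} ≤ (I ⊔ Ideal.span {x}) ^ t := by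
    rw [← Ideal.span_singleton_pow]
    exact Ideal.pow_right_mono le_sup_right t
  obtain ⟨f, hf⟩ := exists_extClass_comp_eq_extRestrict hn hx e he
  obtain ⟨c, m, hmn, hfm⟩ := exists_mk₀_quotientMul_pow_comp_eq_zero h₁ x t n f
  have hzero := extRestrict_extClass_comp_eq_zero hmn (x ^ t) (x ^ c) hfm
  have hpow : (I ⊔ Ideal.span {x}) ^ (m + (c + t)) ≤ I ^ m ⊔ Ideal.span {x ^ c * x ^ t} := by
    rw [← pow_add, ← Ideal.span_singleton_pow]
    exact Ideal.sup_pow_add_le_pow_sup_pow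
  refine ⟨m + (c + t), by lia, ?_⟩
  rw [hf, extRestrict_extRestrict] at hzero
  rw [← extRestrict_extRestrict hpow ((sup_span_singleton_mul_le hmn _ _).trans (sup_le hn hx)),
    hzero, extRestrict_zero]

end LocalCohomology

theorem exists_finset_radical_span_eq_maximalIdeal (R : Type*) [CommRing R]
    [IsNoetherianRing R] [IsLocalRing R] :
    ∃ s : Finset R, (s.card : WithBot ℕ∞) = ringKrullDim R ∧
      (Ideal.span (s : Set R)).radical = IsLocalRing.maximalIdeal R := by
  obtain ⟨s, hs, hcard⟩ := Ideal.exists_finset_card_eq_height_of_isNoetherianRing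
    (IsLocalRing.maximalIdeal R)
  refine ⟨s, ?_, le_antisymm ?_ ?_⟩
  · rw [← IsLocalRing.maximalIdeal_height_eq_ringKrullDim, ← hcard]
    rfl
  · exact hs.1.1.radical_le_iff.2 hs.1.2
  · rw [Ideal.radical_eq_sInf]
    exact le_sInf fun q hq ↦ hs.2 ⟨hq.2, hq.1⟩ (IsLocalRing.le_maximalIdeal hq.2.ne_top)

section CohomologicalDimension

variable {R : Type u} [CommRing R] {I J : Ideal R} {M : ModuleCat.{u} R}

theorem cohomologicalDimension_le_iff {c : ℕ∞} :
    cohomologicalDimension I M ≤ c ↔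
      ∀ i : ℕ, c < i → Subsingleton ((localCohomology I i).obj M) := by
  rw [cohomologicalDimension, sSup_le_iff]
  refine ⟨fun h i hi ↦ ?_, ?_⟩
  · by_contra hs
    exact hi.not_ge (h i ⟨i, rfl, not_subsingleton_iff_nontrivial.1 hs⟩)
  · rintro h _ ⟨i, rfl, hi⟩
    by_contra! hc
    exact not_subsingleton_iff_nontrivial.2 hi (h i hc)

theorem subsingleton_localCohomology_of_cohomologicalDimension_lt {i : ℕ}
    (h : cohomologicalDimension I M < i) : Subsingleton ((localCohomology I i).obj M) :=
  cohomologicalDimension_le_iff.1 le_rfl i h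

variable [IsNoetherianRing R]

theorem cohomologicalDimension_congr_radical (h : I.radical = J.radical) :
    cohomologicalDimension I M = cohomologicalDimension J M := by
  have hiso (i : ℕ) : Nontrivial ((localCohomology I i).obj M) ↔
      Nontrivial ((localCohomology J i).obj M) :=
    ((localCohomology.isoOfSameRadical h i).app M).toLinearEquiv.toEquiv.nontrivial_congr
  simp only [cohomologicalDimension, hiso]

theorem cohomologicalDimension_radical :
    cohomologicalDimension I.radical M = cohomologicalDimension I M :=
  cohomologicalDimension_congr_radical I.radical_idem

theorem cohomologicalDimension_sup_span_singleton_le (x : R) :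
    cohomologicalDimension (I ⊔ Ideal.span {x}) M ≤ cohomologicalDimension I M + 1 := by
  refine cohomologicalDimension_le_iff.2 fun i hi ↦ ?_
  cases i with
  | zero => simp at hi
  | succ j =>
    have hj : cohomologicalDimension I M < j := lt_of_add_lt_add_right (by exact_mod_cast hi)
    exact subsingleton_localCohomology_sup_span_singleton x
      (subsingleton_localCohomology_of_cohomologicalDimension_lt hj)
      (subsingleton_localCohomology_of_cohomologicalDimension_lt
        (hj.trans (by exact_mod_cast j.lt_succ_self)))

theorem cohomologicalDimension_sup_span_le (s : Finset R) :
    cohomologicalDimension (I ⊔ Ideal.span s) M ≤ cohomologicalDimension I M + s.card := by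
  classical
  induction s using Finset.induction_on with
  | empty => simp
  | insert x s hx ih =>
    have hspan : I ⊔ Ideal.span (insert x s : Finset R) =
        (I ⊔ Ideal.span s) ⊔ Ideal.span {x} := by
      rw [Finset.coe_insert, Ideal.span_insert, sup_assoc, sup_comm (Ideal.span {x})]
    calc cohomologicalDimension (I ⊔ Ideal.span (insert x s : Finset R)) M
      _ ≤ cohomologicalDimension (I ⊔ Ideal.span s) M + 1 :=
        hspan ▸ cohomologicalDimension_sup_span_singleton_le x
      _ ≤ cohomologicalDimension I M + s.card + 1 := by gcongr
      _ = cohomologicalDimension I M + (insert x s : Finset R).card := by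
        rw [Finset.card_insert_of_notMem hx, Nat.cast_succ, add_assoc]

variable [IsLocalRing R]

theorem exists_finset_radical_sup_span_eq_maximalIdeal (hI : I ≠ ⊤) :
    ∃ s : Finset R, (s.card : WithBot ℕ∞) ≤ ringKrullDim (R ⧸ I) ∧
      (I ⊔ Ideal.span s).radical = IsLocalRing.maximalIdeal R := by
  classical
  have := Ideal.Quotient.nontrivial_iff.2 hI
  have : IsLocalRing (R ⧸ I) := .of_surjective' _ Ideal.Quotient.mk_surjective
  obtain ⟨t, ht, hrad⟩ := exists_finset_radical_span_eq_maximalIdeal (R ⧸ I)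
  have hmap : (Ideal.span (t.image Quotient.out : Finset R)).map (Ideal.Quotient.mk I) =
      Ideal.span (t : Set (R ⧸ I)) := by
    rw [Ideal.map_span, Finset.coe_image, Set.image_image]
    simp only [Ideal.Quotient.mk_out, Set.image_id']
  refine ⟨t.image Quotient.out, ht ▸ by exact_mod_cast Finset.card_image_le, ?_⟩
  rw [← Ideal.comap_map_quotientMk, hmap, ← Ideal.comap_radical, hrad]
  exact IsLocalRing.eq_maximalIdeal
    (Ideal.comap_isMaximal_of_surjective _ Ideal.Quotient.mk_surjective)

theorem cohomologicalDimension_maximalIdeal_le (hI : I ≠ ⊤) :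
    (cohomologicalDimension (IsLocalRing.maximalIdeal R) M : WithBot ℕ∞) ≤
      cohomologicalDimension I M + ringKrullDim (R ⧸ I) := by
  obtain ⟨s, hs, hrad⟩ := exists_finset_radical_sup_span_eq_maximalIdeal hI
  calc (cohomologicalDimension (IsLocalRing.maximalIdeal R) M : WithBot ℕ∞)
    _ = cohomologicalDimension (I ⊔ Ideal.span s) M := by
      rw [← hrad, cohomologicalDimension_radical]
    _ ≤ cohomologicalDimension I M + s.card := by
      exact_mod_cast cohomologicalDimension_sup_span_le s
    _ ≤ cohomologicalDimension I M + ringKrullDim (R ⧸ I) := by gcongr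

end CohomologicalDimension

section Height

variable {R : Type*} [CommRing R]

theorem idealHeight_asIdeal (p : PrimeSpectrum R) : idealHeight p.asIdeal = Order.height p :=
  le_antisymm (iInf₂_le p le_rfl) (le_iInf₂ fun _ hq ↦ Order.height_mono hq)

theorem idealHeight_maximalIdeal [IsLocalRing R] :
    (idealHeight (IsLocalRing.maximalIdeal R) : WithBot ℕ∞) = ringKrullDim R :=
  (congrArg _ (idealHeight_asIdeal (IsLocalRing.closedPoint R))).trans Order.height_top_eq_krullDim

theorem idealHeight_add_ringKrullDim_quotient_le (p : Ideal R) [hp : p.IsPrime] :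
    (idealHeight p : WithBot ℕ∞) + ringKrullDim (R ⧸ p) ≤ ringKrullDim R := by
  let x : PrimeSpectrum R := ⟨p, hp⟩
  have hcoheight : ringKrullDim (R ⧸ p) = Order.coheight x :=
    (ringKrullDim_quotient p).trans (Order.coheight_eq_krullDim_Ici x).symm
  have : Nonempty (PrimeSpectrum R) := ⟨x⟩
  rw [idealHeight_asIdeal x, hcoheight, ringKrullDim,
    Order.krullDim_eq_iSup_height_add_coheight_of_nonempty]
  exact_mod_cast le_iSup (fun q : PrimeSpectrum R ↦ Order.height q + Order.coheight q) x

end Height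

theorem exists_prime_cd_ne_height_of_not_catenary_general
    (R : Type u) [CommRing R] [IsNoetherianRing R] [IsLocalRing R]
    (hnc : ¬ ∀ p : Ideal R, p.IsPrime →
      (idealHeight p : WithBot ℕ∞) + Order.krullDim (PrimeSpectrum (R ⧸ p)) =
        Order.krullDim (PrimeSpectrum R)) :
    ∃ p : Ideal R, p.IsPrime ∧
      cohomologicalDimension p (ModuleCat.of R R) ≠ idealHeight p := by
  by_contra! hcd
  refine hnc fun p hp ↦ le_antisymm (idealHeight_add_ringKrullDim_quotient_le p) ?_
  calc ringKrullDim R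
    _ = idealHeight (IsLocalRing.maximalIdeal R) := idealHeight_maximalIdeal.symm
    _ = cohomologicalDimension (IsLocalRing.maximalIdeal R) (ModuleCat.of R R) := by
      rw [hcd _ (IsLocalRing.maximalIdeal.isMaximal R).isPrime]
    _ ≤ cohomologicalDimension p (ModuleCat.of R R) + ringKrullDim (R ⧸ p) :=
      cohomologicalDimension_maximalIdeal_le hp.ne_top
    _ = idealHeight p + ringKrullDim (R ⧸ p) := by rw [hcd p hp]

/-- in a non-catenary Noetherian local domain there is a prime ideal `p`
with `cd(p) ≠ ht(p)`; in particular `p` is not a set-theoretic complete intersection. -/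
theorem exists_prime_cd_ne_height_of_not_catenary
    (R : Type u) [CommRing R] [IsDomain R] [IsNoetherianRing R] [IsLocalRing R] (n : ℕ)
    (hn : ringKrullDim R = (n : WithBot ℕ∞))
    (hnc : ¬ ∀ p : Ideal R, p.IsPrime →
      (idealHeight p : WithBot ℕ∞) + Order.krullDim (PrimeSpectrum (R ⧸ p)) =
        Order.krullDim (PrimeSpectrum R)) :
    ∃ p : Ideal R, p.IsPrime ∧
      cohomologicalDimension p (ModuleCat.of R R) ≠ idealHeight p :=
  exists_prime_cd_ne_height_of_not_catenary_general R hnc
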